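/- Let u : ℝ² → ℝ be a smooth solution of Equation (E2): u_yy = (u_x + x)·u_xy − u_y·(u_xx + 2), such that u_y is nowhere zero. Then the pair P := −e^{−y}/u_y, Q := −(u_x + x)·e^{−y}/u_y is a conservation law: ∂P/∂y = ∂Q/∂x at every point of ℝ². -/

import Mathlib

/-- Partial derivative of a function on `ℝ²` in the direction `v`. -/
noncomputable def pd (v : ℝ × ℝ) (f : ℝ × ℝ → ℝ) : ℝ × ℝ → ℝ :=
  fun p => fderiv ℝ f p v

/-- Coordinates are `(x, y)`. -/
noncomputable def dx : (ℝ × ℝ → ℝ) → ℝ × ℝ → ℝ := pd (1, 0)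
noncomputable def dy : (ℝ × ℝ → ℝ) → ℝ × ℝ → ℝ := pd (0, 1)

/-!
Write `Δ` for the left-hand side minus the right-hand side of (E2). For every `u`, solution or not,
the quotient rule and `u_xy = u_yx` give `∂P/∂y - ∂Q/∂x = (e^{-y} / u_y²) Δ`. The factor
`e^{-y} / u_y²`, the characteristic of the conservation law, never vanishes, so at each point
`∂P/∂y = ∂Q/∂x` is in fact equivalent to (E2).
-/

theorem differentiableAt_fderiv_of_contDiffAt_two {𝕜 E F : Type*} [NontriviallyNormedField 𝕜]
    [NormedAddCommGroup E] [NormedSpace 𝕜 E] [NormedAddCommGroup F] [NormedSpace 𝕜 F]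
    {f : E → F} {x : E} (hf : ContDiffAt 𝕜 2 f x) : DifferentiableAt 𝕜 (fderiv 𝕜 f) x :=
  (hf.fderiv_right (m := 1) (by norm_num)).differentiableAt one_ne_zero

section PartialDerivatives

variable {f g u : ℝ × ℝ → ℝ} {p : ℝ × ℝ}

theorem differentiableAt_pd (hu : ContDiffAt ℝ 2 u p) (v : ℝ × ℝ) :
    DifferentiableAt ℝ (pd v u) p :=
  (differentiableAt_fderiv_of_contDiffAt_two hu).clm_apply (differentiableAt_const v)

theorem pd_pd_eq_fderiv_fderiv (hu : ContDiffAt ℝ 2 u p) (v w : ℝ × ℝ) :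
    pd v (pd w u) p = fderiv ℝ (fderiv ℝ u) p v w := by
  change fderiv ℝ (fun q => fderiv ℝ u q w) p v = _
  simp [fderiv_clm_apply (differentiableAt_fderiv_of_contDiffAt_two hu)
    (differentiableAt_const w)]

theorem pd_comm (hu : ContDiffAt ℝ 2 u p) (v w : ℝ × ℝ) :
    pd v (pd w u) p = pd w (pd v u) p := by
  rw [pd_pd_eq_fderiv_fderiv hu, pd_pd_eq_fderiv_fderiv hu]
  exact (hu.isSymmSndFDerivAt (by simp)).eq v w

theorem pd_div (hf : DifferentiableAt ℝ f p) (hg : DifferentiableAt ℝ g p) (hgp : g p ≠ 0)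
    (v : ℝ × ℝ) :
    pd v (fun q => f q / g q) p = (pd v f p * g p - f p * pd v g p) / g p ^ 2 := by
  have hf_line : HasDerivAt (fun t : ℝ => f (p + t • v)) (pd v f p) 0 :=
    hf.hasFDerivAt.hasLineDerivAt v
  have hg_line : HasDerivAt (fun t : ℝ => g (p + t • v)) (pd v g p) 0 :=
    hg.hasFDerivAt.hasLineDerivAt v
  have hquot_line : HasLineDerivAt ℝ (fun q => f q / g q)
      ((pd v f p * g p - f p * pd v g p) / g p ^ 2) p v := by
    simpa [HasLineDerivAt] using hf_line.fun_div hg_line (by simpa using hgp)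
  have hquot : DifferentiableAt ℝ (fun q => f q / g q) p := by fun_prop (disch := exact hgp)
  exact (hquot.hasFDerivAt.hasLineDerivAt v).unique hquot_line

theorem dy_neg_exp_neg_snd (p : ℝ × ℝ) :
    dy (fun q => -Real.exp (-q.2)) p = Real.exp (-p.2) := by
  have hneg : DifferentiableAt ℝ (fun q : ℝ × ℝ => -q.2) p := by fun_prop
  simp [dy, pd, fderiv_exp hneg, fderiv_snd]

theorem dx_neg_add_fst_mul_exp_neg_snd (hf : DifferentiableAt ℝ f p) :
    dx (fun q => -(f q + q.1) * Real.exp (-q.2)) p = -(dx f p + 1) * Real.exp (-p.2) := by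
  have hneg : DifferentiableAt ℝ (fun q : ℝ × ℝ => -q.2) p := by fun_prop
  have hsum : DifferentiableAt ℝ (fun q : ℝ × ℝ => -(f q + q.1)) p := by fun_prop
  simp only [dx, pd]
  rw [fderiv_fun_mul hsum hneg.exp, fderiv_exp hneg, fderiv_fun_neg, fderiv_fun_neg,
    fderiv_fun_add hf differentiableAt_fst]
  simp only [fderiv_fst, fderiv_snd, add_apply, neg_apply, smul_apply, smul_eq_mul,
    ContinuousLinearMap.coe_fst', ContinuousLinearMap.coe_snd']
  ring

end PartialDerivatives

section ConservationLaw

variable {u : ℝ × ℝ → ℝ} {p : ℝ × ℝ}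

theorem dy_density_sub_dx_flux (hu : ContDiffAt ℝ 2 u p) (hy : dy u p ≠ 0) :
    dy (fun q => -Real.exp (-q.2) / dy u q) p
        - dx (fun q => -(dx u q + q.1) * Real.exp (-q.2) / dy u q) p
      = Real.exp (-p.2) / dy u p ^ 2 *
        (dy (dy u) p - ((dx u p + p.1) * dy (dx u) p - dy u p * (dx (dx u) p + 2))) := by
  have hux : DifferentiableAt ℝ (dx u) p := differentiableAt_pd hu (1, 0)
  have huy : DifferentiableAt ℝ (dy u) p := differentiableAt_pd hu (0, 1)
  have hP : dy (fun q => -Real.exp (-q.2) / dy u q) p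
      = (Real.exp (-p.2) * dy u p - -Real.exp (-p.2) * dy (dy u) p) / dy u p ^ 2 := by
    have hnum : DifferentiableAt ℝ (fun q : ℝ × ℝ => -Real.exp (-q.2)) p := by fun_prop
    have hquot := pd_div hnum huy hy (0, 1)
    rwa [← dy, dy_neg_exp_neg_snd] at hquot
  have hQ : dx (fun q => -(dx u q + q.1) * Real.exp (-q.2) / dy u q) p
      = (-(dx (dx u) p + 1) * Real.exp (-p.2) * dy u p
          - -(dx u p + p.1) * Real.exp (-p.2) * dx (dy u) p) / dy u p ^ 2 := by
    have hnum : DifferentiableAt ℝ (fun q => -(dx u q + q.1) * Real.exp (-q.2)) p := by fun_prop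
    have hquot := pd_div hnum huy hy (1, 0)
    rwa [← dx, dx_neg_add_fst_mul_exp_neg_snd hux] at hquot
  have hxy : dx (dy u) p = dy (dx u) p := pd_comm hu (1, 0) (0, 1)
  rw [hP, hQ, hxy]
  ring

theorem E2_conservation_law_general (hu : ContDiffAt ℝ 2 u p) (hy : dy u p ≠ 0) :
    dy (fun q => -Real.exp (-q.2) / dy u q) p
        = dx (fun q => -(dx u q + q.1) * Real.exp (-q.2) / dy u q) p ↔
      dy (dy u) p = (dx u p + p.1) * dy (dx u) p - dy u p * (dx (dx u) p + 2) := by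
  have hcharacteristic : Real.exp (-p.2) / dy u p ^ 2 ≠ 0 := by positivity
  rw [← sub_eq_zero, dy_density_sub_dx_flux hu hy, mul_eq_zero_iff_left hcharacteristic,
    sub_eq_zero]

end ConservationLaw

/-- For a smooth solution `u` of Equation (E2)
`u_yy = (u_x + x)·u_xy − u_y·(u_xx + 2)` with `u_y` nowhere zero, the pair
`P = −e^{−y}/u_y`, `Q = −(u_x + x)·e^{−y}/u_y` is a conservation law:
`∂P/∂y = ∂Q/∂x`. -/
theorem E2_conservation_law (u : ℝ × ℝ → ℝ)
    (hu : ContDiff ℝ (⊤ : ℕ∞) u)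
    (hy : ∀ p : ℝ × ℝ, dy u p ≠ 0)
    (hsol : ∀ p : ℝ × ℝ,
      dy (dy u) p = (dx u p + p.1) * dy (dx u) p - dy u p * (dx (dx u) p + 2)) :
    ∀ p : ℝ × ℝ,
      dy (fun q => -Real.exp (-q.2) / dy u q) p
        = dx (fun q => -(dx u q + q.1) * Real.exp (-q.2) / dy u q) p := by
  intro p
  have hu₂ : ContDiffAt ℝ 2 u p := (contDiff_infty.1 hu 2).contDiffAt
  exact (E2_conservation_law_general hu₂ (hy p)).2 (hsol p)
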